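/- arXiv:2308.08983 — 2 statements merged into one kernel-verified Lean document; each statement's English description precedes it below -/
import Mathlib

section
/- For every labeled P/T Petri net N = (S, A, T): if R1 is a structure-preserving bisimulation on N, then R2 = {(π1(l), π2(l)) | l ∈ R1} is an interleaving bisimulation. Consequently, if m1 ~sp m2, then (1) for every transition t1 with m1[t1⟩m1' there exists a transition t2 with m2[t2⟩m2', |•t1| = |•t2|, ℓ(t1) = ℓ(t2), |t1•| = |t2•|, and m1' ~sp m2'; and (2) symmetrically for every transition t2 with m2[t2⟩m2'. In particular, structure-preserving bisimilarity implies interleaving bisimilarity. -/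
/-- A labeled P/T Petri net over the (countable) type `S` of places and the
(finite) type `A` of labels: a countable set of transitions, each consisting
of a nonempty finite multiset over `S` (the preset), a label in `A`, and a
finite multiset over `S` (the postset).  Markings are finite multisets over `S`. -/
structure PetriNet (S A : Type) where
  T : Set (Multiset S × A × Multiset S)
  countable_T : T.Countable
  pre_nonempty : ∀ t ∈ T, t.1 ≠ 0

namespace PetriNet

variable {S A : Type} [DecidableEq S]

/-- First projection of a linking: `π1(l)(s1) = Σ_{s2} l(s1,s2)`. -/
def pi1 (l : Multiset (S × S)) : Multiset S := l.map Prod.fst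

/-- Second projection of a linking: `π2(l)(s2) = Σ_{s1} l(s1,s2)`. -/
def pi2 (l : Multiset (S × S)) : Multiset S := l.map Prod.snd

/-- A structure-preserving bisimulation on a net: a set `R` of linkings such
that every `l ∈ R` and every `c ⊆ l` satisfy the two transfer properties. -/
def IsSPBisim (N : PetriNet S A) (R : Set (Multiset (S × S))) : Prop :=
  ∀ l ∈ R, ∀ c ≤ l,
    (∀ t1 ∈ N.T, t1.1 = pi1 c →
      ∃ t2 ∈ N.T, t2.2.1 = t1.2.1 ∧ t2.1 = pi2 c ∧
        ∃ cb : Multiset (S × S),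
          pi1 cb = t1.2.2 ∧ pi2 cb = t2.2.2 ∧ l - c + cb ∈ R) ∧
    (∀ t2 ∈ N.T, t2.1 = pi2 c →
      ∃ t1 ∈ N.T, t1.2.1 = t2.2.1 ∧ t1.1 = pi1 c ∧
        ∃ cb : Multiset (S × S),
          pi1 cb = t1.2.2 ∧ pi2 cb = t2.2.2 ∧ l - c + cb ∈ R)

/-- Structure-preserving bisimilarity of markings. -/
def SPBisimilar (N : PetriNet S A) (m1 m2 : Multiset S) : Prop :=
  ∃ R, N.IsSPBisim R ∧ ∃ l ∈ R, pi1 l = m1 ∧ pi2 l = m2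

end PetriNet

namespace PetriNet

variable {S A : Type} [DecidableEq S]

/-- `N.Fires m t m'`: transition `t` of `N` is enabled at marking `m`
(`•t ⊆ m`) and its firing produces `m' = (m ⊖ •t) ⊕ t•`. -/
def Fires (N : PetriNet S A) (m : Multiset S)
    (t : Multiset S × A × Multiset S) (m' : Multiset S) : Prop :=
  t ∈ N.T ∧ t.1 ≤ m ∧ m' = m - t.1 + t.2.2

/-- Interleaving bisimulation. -/
def IsIntBisim (N : PetriNet S A) (R : Set (Multiset S × Multiset S)) : Prop :=
  ∀ mm ∈ R,
    (∀ t1 m1', N.Fires mm.1 t1 m1' →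
      ∃ t2 m2', N.Fires mm.2 t2 m2' ∧ t1.2.1 = t2.2.1 ∧ (m1', m2') ∈ R) ∧
    (∀ t2 m2', N.Fires mm.2 t2 m2' →
      ∃ t1 m1', N.Fires mm.1 t1 m1' ∧ t1.2.1 = t2.2.1 ∧ (m1', m2') ∈ R)

/-- Interleaving bisimilarity. -/
def IntBisimilar (N : PetriNet S A) (m1 m2 : Multiset S) : Prop :=
  ∃ R, N.IsIntBisim R ∧ (m1, m2) ∈ R

end PetriNet

/-!
If `π1(l)` enables `t1`, then `•t1` lifts to some `c ≤ l` with `π1(c) = •t1`. The bisimulation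
property supplies a transition `t2` with preset `π2(c)` and a linking `d` between the postsets, so
`l - c + d` links the markings reached by firing `t1` and `t2`; equality of sizes is automatic,
since both projections of a linking have as many elements as the linking itself. Exchanging the
two components of every link gives the other direction.
-/

section Multiset

variable {α β : Type*}

theorem exists_le_and_map_eq_of_le_map {f : α → β} {s : Multiset α} {t : Multiset β}
    (h : t ≤ s.map f) : ∃ u ≤ s, u.map f = t := by
  induction s, t using Quotient.inductionOn₂ with
  | h s t =>
    obtain ⟨t', ht', hsub⟩ : t.Subperm (s.map f) := h
    obtain ⟨u, hu, rfl⟩ := List.sublist_map_iff.mp hsub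
    exact ⟨(u : Multiset α), hu.subperm, Quotient.sound ht'⟩

theorem multiset_map_sub_of_le [DecidableEq α] [DecidableEq β] (f : α → β) {s t : Multiset α}
    (h : t ≤ s) : (s - t).map f = s.map f - t.map f :=
  eq_tsub_of_add_eq <| by rw [← Multiset.map_add, tsub_add_cancel_of_le h]

theorem multiset_map_swap_map_swap (s : Multiset (α × β)) :
    (s.map Prod.swap).map Prod.swap = s := by
  rw [Multiset.map_map, Prod.swap_swap_eq, Multiset.map_id]

end Multiset

namespace PetriNet

variable {S A : Type}

section Linkings

variable {R : Set (Multiset (S × S))} {m1 m2 : Multiset S}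

theorem card_pi1_eq_card_pi2 (l : Multiset (S × S)) :
    Multiset.card (pi1 l) = Multiset.card (pi2 l) := by
  simp only [pi1, pi2, Multiset.card_map]

theorem pi1_map_swap (l : Multiset (S × S)) : pi1 (l.map Prod.swap) = pi2 l :=
  Multiset.map_map _ _ _

theorem pi2_map_swap (l : Multiset (S × S)) : pi2 (l.map Prod.swap) = pi1 l :=
  Multiset.map_map _ _ _

/-- The pairs of markings `(π1(l), π2(l))` linked by some `l ∈ R`. -/
def linkedMarkings (R : Set (Multiset (S × S))) : Set (Multiset S × Multiset S) :=
  {mm | ∃ l ∈ R, pi1 l = mm.1 ∧ pi2 l = mm.2}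

/-- The converse of a set of linkings, obtained by exchanging the two components of every link;
encoded as a preimage, which for the involution `Multiset.map Prod.swap` is also the image. -/
def converse (R : Set (Multiset (S × S))) : Set (Multiset (S × S)) :=
  Multiset.map Prod.swap ⁻¹' R

theorem mem_linkedMarkings_converse (h : (m1, m2) ∈ linkedMarkings R) :
    (m2, m1) ∈ linkedMarkings (converse R) := by
  obtain ⟨l, hl, h1, h2⟩ := h
  refine ⟨l.map Prod.swap, ?_, (pi1_map_swap l).trans h2, (pi2_map_swap l).trans h1⟩
  rwa [converse, Set.mem_preimage, multiset_map_swap_map_swap]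

theorem converse_converse (R : Set (Multiset (S × S))) : converse (converse R) = R := by
  ext l
  simp only [converse, Set.mem_preimage, multiset_map_swap_map_swap]

end Linkings

variable [DecidableEq S] {N : PetriNet S A} {R : Set (Multiset (S × S))}
  {m m1 m2 m1' m2' m' m'' : Multiset S} {t t1 t2 : Multiset S × A × Multiset S}

theorem Fires.unique (h' : N.Fires m t m') (h'' : N.Fires m t m'') : m' = m'' :=
  h'.2.2.trans h''.2.2.symm

theorem fires_map {α : Type*} [DecidableEq α] {f : α → S} {l c d : Multiset α}
    (ht : t ∈ N.T) (hcl : c ≤ l) (hc : c.map f = t.1) (hd : d.map f = t.2.2) :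
    N.Fires (l.map f) t ((l - c + d).map f) :=
  ⟨ht, hc ▸ Multiset.map_le_map hcl,
    by rw [Multiset.map_add, multiset_map_sub_of_le f hcl, hc, hd]⟩

namespace IsSPBisim

theorem exists_fires_right (hR : N.IsSPBisim R) (hm : (m1, m2) ∈ linkedMarkings R)
    (h1 : N.Fires m1 t1 m1') :
    ∃ t2 m2', N.Fires m2 t2 m2' ∧
      Multiset.card t1.1 = Multiset.card t2.1 ∧ t1.2.1 = t2.2.1 ∧
      Multiset.card t1.2.2 = Multiset.card t2.2.2 ∧ (m1', m2') ∈ linkedMarkings R := by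
  obtain ⟨l, hl, rfl, rfl⟩ := hm
  obtain ⟨c, hcl, hpre1⟩ : ∃ c ≤ l, pi1 c = t1.1 := exists_le_and_map_eq_of_le_map h1.2.1
  obtain ⟨t2, ht2, hlabel, hpre2, d, hpost1, hpost2, hmem⟩ :=
    (hR l hl c hcl).1 t1 h1.1 hpre1.symm
  have h1' : N.Fires (pi1 l) t1 (pi1 (l - c + d)) := fires_map h1.1 hcl hpre1 hpost1
  have h2' : N.Fires (pi2 l) t2 (pi2 (l - c + d)) := fires_map ht2 hcl hpre2.symm hpost2
  refine ⟨t2, _, h2', ?_, hlabel.symm, ?_, l - c + d, hmem, h1'.unique h1, rfl⟩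
  · rw [← hpre1, hpre2, card_pi1_eq_card_pi2]
  · rw [← hpost1, ← hpost2, card_pi1_eq_card_pi2]

protected theorem converse (hR : N.IsSPBisim R) : N.IsSPBisim (converse R) := by
  intro l hl c hcl
  have hmem {d : Multiset (S × S)} (h : l.map Prod.swap - c.map Prod.swap + d ∈ R) :
      l - c + d.map Prod.swap ∈ PetriNet.converse R := by
    rwa [PetriNet.converse, Set.mem_preimage, Multiset.map_add, multiset_map_sub_of_le _ hcl,
      multiset_map_swap_map_swap]
  obtain ⟨hleft, hright⟩ := hR (l.map Prod.swap) hl (c.map Prod.swap) (Multiset.map_le_map hcl)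
  rw [pi1_map_swap, pi2_map_swap] at hleft hright
  constructor
  · intro t1 ht1 hpre1
    obtain ⟨t2, ht2, hlabel, hpre2, d, hpost2, hpost1, hd⟩ := hright t1 ht1 hpre1
    exact ⟨t2, ht2, hlabel, hpre2, d.map Prod.swap, (pi1_map_swap d).trans hpost1,
      (pi2_map_swap d).trans hpost2, hmem hd⟩
  · intro t2 ht2 hpre2
    obtain ⟨t1, ht1, hlabel, hpre1, d, hpost2, hpost1, hd⟩ := hleft t2 ht2 hpre2
    exact ⟨t1, ht1, hlabel, hpre1, d.map Prod.swap, (pi1_map_swap d).trans hpost1,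
      (pi2_map_swap d).trans hpost2, hmem hd⟩

theorem exists_fires_left (hR : N.IsSPBisim R) (hm : (m1, m2) ∈ linkedMarkings R)
    (h2 : N.Fires m2 t2 m2') :
    ∃ t1 m1', N.Fires m1 t1 m1' ∧
      Multiset.card t1.1 = Multiset.card t2.1 ∧ t1.2.1 = t2.2.1 ∧
      Multiset.card t1.2.2 = Multiset.card t2.2.2 ∧ (m1', m2') ∈ linkedMarkings R := by
  obtain ⟨t1, m1', h1, hpre, hlabel, hpost, hm'⟩ :=
    hR.converse.exists_fires_right (mem_linkedMarkings_converse hm) h2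
  exact ⟨t1, m1', h1, hpre.symm, hlabel.symm, hpost.symm,
    converse_converse R ▸ mem_linkedMarkings_converse hm'⟩

theorem isIntBisim_linkedMarkings (hR : N.IsSPBisim R) : N.IsIntBisim (linkedMarkings R) := by
  intro mm hm
  constructor
  · intro t1 m1' h1
    obtain ⟨t2, m2', h2, -, hlabel, -, hm'⟩ := hR.exists_fires_right hm h1
    exact ⟨t2, m2', h2, hlabel, hm'⟩
  · intro t2 m2' h2
    obtain ⟨t1, m1', h1, -, hlabel, -, hm'⟩ := hR.exists_fires_left hm h2
    exact ⟨t1, m1', h1, hlabel, hm'⟩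

end IsSPBisim

end PetriNet

theorem spBisim_implies_intBisim_general {S A : Type} [DecidableEq S]
    (N : PetriNet S A) :
    (∀ R1, N.IsSPBisim R1 →
      N.IsIntBisim {mm | ∃ l ∈ R1, PetriNet.pi1 l = mm.1 ∧ PetriNet.pi2 l = mm.2}) ∧
    (∀ m1 m2, N.SPBisimilar m1 m2 →
      (∀ t1 m1', N.Fires m1 t1 m1' →
        ∃ t2 m2', N.Fires m2 t2 m2' ∧
          Multiset.card t1.1 = Multiset.card t2.1 ∧ t1.2.1 = t2.2.1 ∧
          Multiset.card t1.2.2 = Multiset.card t2.2.2 ∧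
          N.SPBisimilar m1' m2') ∧
      (∀ t2 m2', N.Fires m2 t2 m2' →
        ∃ t1 m1', N.Fires m1 t1 m1' ∧
          Multiset.card t1.1 = Multiset.card t2.1 ∧ t1.2.1 = t2.2.1 ∧
          Multiset.card t1.2.2 = Multiset.card t2.2.2 ∧
          N.SPBisimilar m1' m2')) ∧
    (∀ m1 m2, N.SPBisimilar m1 m2 → N.IntBisimilar m1 m2) := by
  refine ⟨fun R1 hR1 => hR1.isIntBisim_linkedMarkings, ?_, ?_⟩
  · rintro m1 m2 ⟨R, hR, hm⟩
    constructor
    · intro t1 m1' h1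
      obtain ⟨t2, m2', h2, hpre, hlabel, hpost, hm'⟩ := hR.exists_fires_right hm h1
      exact ⟨t2, m2', h2, hpre, hlabel, hpost, R, hR, hm'⟩
    · intro t2 m2' h2
      obtain ⟨t1, m1', h1, hpre, hlabel, hpost, hm'⟩ := hR.exists_fires_left hm h2
      exact ⟨t1, m1', h1, hpre, hlabel, hpost, R, hR, hm'⟩
  · rintro m1 m2 ⟨R, hR, hm⟩
    exact ⟨PetriNet.linkedMarkings R, hR.isIntBisim_linkedMarkings, hm⟩

/-- if `R1` is a structure-preserving bisimulation then
`R2 = {(π1(l), π2(l)) | l ∈ R1}` is an interleaving bisimulation;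
consequently, sp-bisimilar markings match each other's transitions by
transitions with the same preset size, the same label and the same postset
size, reaching sp-bisimilar markings; in particular, structure-preserving
bisimilarity implies interleaving bisimilarity. -/
theorem spBisim_implies_intBisim {S A : Type} [DecidableEq S] [Countable S]
    [Finite A] (N : PetriNet S A) :
    (∀ R1, N.IsSPBisim R1 →
      N.IsIntBisim {mm | ∃ l ∈ R1, PetriNet.pi1 l = mm.1 ∧ PetriNet.pi2 l = mm.2}) ∧
    (∀ m1 m2, N.SPBisimilar m1 m2 →
      (∀ t1 m1', N.Fires m1 t1 m1' →
        ∃ t2 m2', N.Fires m2 t2 m2' ∧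
          Multiset.card t1.1 = Multiset.card t2.1 ∧ t1.2.1 = t2.2.1 ∧
          Multiset.card t1.2.2 = Multiset.card t2.2.2 ∧
          N.SPBisimilar m1' m2') ∧
      (∀ t2 m2', N.Fires m2 t2 m2' →
        ∃ t1 m1', N.Fires m1 t1 m1' ∧
          Multiset.card t1.1 = Multiset.card t2.1 ∧ t1.2.1 = t2.2.1 ∧
          Multiset.card t1.2.2 = Multiset.card t2.2.2 ∧
          N.SPBisimilar m1' m2')) ∧
    (∀ m1 m2, N.SPBisimilar m1 m2 → N.IntBisimilar m1 m2) :=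
  spBisim_implies_intBisim_general N
end

section
/- Given a P/T net system N(m0) = (S, A, T, m0), if its dynamically reachable subnet is Net_d(N(m0)) = (S', A', T', m0) and its statically reachable subnet is Net_s(N(m0)) = (S'', A'', T'', m0), then S' ⊆ S'', T' ⊆ T'' and A' ⊆ A''. -/
namespace PetriNet

variable {S A : Type} [DecidableEq S]

/-- The set `[m0⟩` of markings (dynamically) reachable from `m0`. -/
def Reach (N : PetriNet S A) (m0 : Multiset S) : Set (Multiset S) :=
  {m | Relation.ReflTransGen (fun x y => ∃ t, N.Fires x t y) m0 m}

/-- Places of the dynamically reachable subnet: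
`S' = {s | ∃ m ∈ [m0⟩, m(s) ≥ 1}`. -/
def dynPlaces (N : PetriNet S A) (m0 : Multiset S) : Set S :=
  {s | ∃ m ∈ N.Reach m0, s ∈ m}

/-- Transitions of the dynamically reachable subnet:
`T' = {t ∈ T | ∃ m ∈ [m0⟩, m[t⟩}`. -/
def dynTrans (N : PetriNet S A) (m0 : Multiset S) :
    Set (Multiset S × A × Multiset S) :=
  {t | t ∈ N.T ∧ ∃ m ∈ N.Reach m0, t.1 ≤ m}

/-- Labels of the dynamically reachable subnet: `A' = {ℓ(t) | t ∈ T'}`. -/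
def dynLabs (N : PetriNet S A) (m0 : Multiset S) : Set A :=
  {a | ∃ t ∈ N.dynTrans m0, t.2.1 = a}

/-- `t` is statically enabled by the set `S1` of places: `dom(•t) ⊆ S1`. -/
def statEnabled (N : PetriNet S A) (t : Multiset S × A × Multiset S)
    (S1 : Set S) : Prop :=
  ∀ s ∈ t.1, s ∈ S1

/-- One step of static reachability: `S1 ⟹t S2` for some `t ∈ T` with
`S1⟦t⟩`, `dom(t•) ⊄ S1` and `S2 = S1 ∪ dom(t•)`. -/
def statStep (N : PetriNet S A) (S1 S2 : Set S) : Prop :=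
  ∃ t ∈ N.T, N.statEnabled t S1 ∧ ¬ (∀ s ∈ t.2.2, s ∈ S1) ∧
    S2 = S1 ∪ {s | s ∈ t.2.2}

/-- Static reachability `⟹*`: reflexive-transitive closure of `statStep`. -/
def StatReach (N : PetriNet S A) : Set S → Set S → Prop :=
  Relation.ReflTransGen N.statStep

/-- `Sk = ⟦dom(m0)⟩`, the largest set of places statically reachable from
`dom(m0)`: `dom(m0) ⟹* Sk` and every transition statically enabled at `Sk`
has `dom(t•) ⊆ Sk`. -/
def IsStatClosure (N : PetriNet S A) (m0 : Multiset S) (Sk : Set S) : Prop :=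
  N.StatReach {s | s ∈ m0} Sk ∧
  ∀ t ∈ N.T, N.statEnabled t Sk → ∀ s ∈ t.2.2, s ∈ Sk

/-- Transitions of the statically reachable subnet: `T'' = {t ∈ T | Sk⟦t⟩}`. -/
def statTrans (N : PetriNet S A) (Sk : Set S) :
    Set (Multiset S × A × Multiset S) :=
  {t | t ∈ N.T ∧ N.statEnabled t Sk}

/-- Labels of the statically reachable subnet: `A'' = {ℓ(t) | t ∈ T''}`. -/
def statLabs (N : PetriNet S A) (Sk : Set S) : Set A :=
  {a | ∃ t ∈ N.statTrans Sk, t.2.1 = a}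

end PetriNet

/-! Let `P` be a set of places closed under statically enabled transitions. A transition enabled at
a marking supported in `P` is statically enabled by `P`, so firing it only adds tokens inside `P`;
consumption of tokens never enlarges the support. Hence all tokens of a reachable marking stay
in any such `P` that contains the support of the initial marking. -/

namespace PetriNet

variable {S A : Type} {N : PetriNet S A} {t : Multiset S × A × Multiset S} {P Q : Set S}
  {m m' m0 : Multiset S}

/-- Closure under static firing: every transition statically enabled by `P` has its postset in `P`.
Unlike `IsStatClosure`, this does not require `P` to be statically reachable from a marking. -/
def IsStatClosed (N : PetriNet S A) (P : Set S) : Prop :=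
  ∀ t ∈ N.T, N.statEnabled t P → ∀ s ∈ t.2.2, s ∈ P

theorem statStep.subset (h : N.statStep P Q) : P ⊆ Q := by
  obtain ⟨t, -, -, -, rfl⟩ := h
  exact Set.subset_union_left

theorem StatReach.subset (h : N.StatReach P Q) : P ⊆ Q := by
  induction h with
  | refl => exact subset_rfl
  | tail _ step ih => exact ih.trans step.subset

theorem IsStatClosure.support_subset (h : N.IsStatClosure m0 P) : {s | s ∈ m0} ⊆ P :=
  h.1.subset

theorem IsStatClosure.isStatClosed (h : N.IsStatClosure m0 P) : N.IsStatClosed P :=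
  h.2

theorem statEnabled_of_le (hle : t.1 ≤ m) (hm : {s | s ∈ m} ⊆ P) : N.statEnabled t P :=
  fun _ hs => hm (Multiset.mem_of_le hle hs)

variable [DecidableEq S]

theorem IsStatClosed.support_subset_of_fires (hP : N.IsStatClosed P) (hm : {s | s ∈ m} ⊆ P)
    (hfire : N.Fires m t m') : {s | s ∈ m'} ⊆ P := by
  obtain ⟨ht, hle, rfl⟩ := hfire
  intro s hs
  rcases Multiset.mem_add.1 hs with hrest | hpost
  · exact hm (Multiset.mem_of_le (Multiset.sub_le_self _ _) hrest)
  · exact hP t ht (statEnabled_of_le hle hm) s hpost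

theorem IsStatClosed.support_subset_of_mem_reach (hP : N.IsStatClosed P)
    (hm0 : {s | s ∈ m0} ⊆ P) (hm : m ∈ N.Reach m0) : {s | s ∈ m} ⊆ P := by
  induction hm with
  | refl => exact hm0
  | tail _ step ih =>
    obtain ⟨t, hfire⟩ := step
    exact hP.support_subset_of_fires ih hfire

theorem IsStatClosed.dynPlaces_subset (hP : N.IsStatClosed P) (hm0 : {s | s ∈ m0} ⊆ P) :
    N.dynPlaces m0 ⊆ P := by
  rintro s ⟨m, hm, hs⟩
  exact hP.support_subset_of_mem_reach hm0 hm hs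

theorem dynTrans_subset_statTrans (hP : N.dynPlaces m0 ⊆ P) :
    N.dynTrans m0 ⊆ N.statTrans P := by
  rintro t ⟨ht, m, hm, hle⟩
  exact ⟨ht, statEnabled_of_le hle fun s hs => hP ⟨m, hm, hs⟩⟩

theorem dynLabs_subset_statLabs (hP : N.dynPlaces m0 ⊆ P) : N.dynLabs m0 ⊆ N.statLabs P := by
  rintro _ ⟨t, ht, rfl⟩
  exact ⟨t, dynTrans_subset_statTrans hP ht, rfl⟩

end PetriNet

theorem dynSubnet_subset_statSubnet_general {S A : Type} [DecidableEq S] (N : PetriNet S A)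
    (m0 : Multiset S) (P : Set S) (hP : N.IsStatClosed P) (hm0 : {s | s ∈ m0} ⊆ P) :
    N.dynPlaces m0 ⊆ P ∧ N.dynTrans m0 ⊆ N.statTrans P ∧ N.dynLabs m0 ⊆ N.statLabs P :=
  have hplaces := hP.dynPlaces_subset hm0
  ⟨hplaces, PetriNet.dynTrans_subset_statTrans hplaces, PetriNet.dynLabs_subset_statLabs hplaces⟩

/-- the dynamically reachable subnet is contained in the
statically reachable subnet: `S' ⊆ S''`, `T' ⊆ T''` and `A' ⊆ A''`. -/
theorem dynSubnet_subset_statSubnet {S A : Type} [DecidableEq S]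
    [Countable S] [Finite A] (N : PetriNet S A) (m0 : Multiset S)
    (Sk : Set S) (hSk : N.IsStatClosure m0 Sk) :
    N.dynPlaces m0 ⊆ Sk ∧ N.dynTrans m0 ⊆ N.statTrans Sk ∧
    N.dynLabs m0 ⊆ N.statLabs Sk := by
  exact dynSubnet_subset_statSubnet_general N m0 Sk hSk.isStatClosed hSk.support_subset
end
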